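/- Let (n_p, n_r, ℓ_p, ℓ_r, S) be a paper assignment instance in which S is blockwise dominant with block identity A ∈ ℝ_{≥0}^{k×k} and block sizes (p_1,…,p_k), (r_1,…,r_k). Assume p_i·ℓ_p ≤ r_i·ℓ_r and Q·r_i ≥ ℓ_p for all i ∈ {1,…,k}. Let f be a strictly concave perturbation function with f′(0) < Dom(A)·f′(1). Then the within-group uniform assignment x*, defined by x*_{p,r} = ℓ_p/r_i if paper p and reviewer r both belong to group i and x*_{p,r} = 0 otherwise, is the unique maximizer of PQuality_f over F(Q); that is, PM(Q,f) = {x*}. -/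

import Mathlib

open Finset

noncomputable section

/-- The feasible set `F(Q)` of randomized assignments. -/
def Feasible (np nr lp lr : ℕ) (Q : ℝ) (x : Fin np → Fin nr → ℝ) : Prop :=
  (∀ p, ∑ r, x p r = (lp : ℝ)) ∧ (∀ r, ∑ p, x p r ≤ (lr : ℝ)) ∧
    ∀ p r, 0 ≤ x p r ∧ x p r ≤ Q

/-- `Quality(x) = Σ_{p,r} x_{p,r} S_{p,r}`. -/
def Quality {np nr : ℕ} (S x : Fin np → Fin nr → ℝ) : ℝ :=
  ∑ p, ∑ r, x p r * S p r

/-- `PQuality_f(x) = Σ_{p,r} S_{p,r} f(x_{p,r})`. -/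
def PQuality {np nr : ℕ} (f : ℝ → ℝ) (S x : Fin np → Fin nr → ℝ) : ℝ :=
  ∑ p, ∑ r, S p r * f (x p r)

/-- `PLRA(Q)`: the set of maximizers of `Quality` over `F(Q)`. -/
def PLRA (np nr lp lr : ℕ) (Q : ℝ) (S : Fin np → Fin nr → ℝ) :
    Set (Fin np → Fin nr → ℝ) :=
  {x | Feasible np nr lp lr Q x ∧
    ∀ y, Feasible np nr lp lr Q y → Quality S y ≤ Quality S x}

/-- `PM(Q,f)`: the set of maximizers of `PQuality_f` over `F(Q)`. -/
def PM (np nr lp lr : ℕ) (Q : ℝ) (f : ℝ → ℝ) (S : Fin np → Fin nr → ℝ) :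
    Set (Fin np → Fin nr → ℝ) :=
  {x | Feasible np nr lp lr Q x ∧
    ∀ y, Feasible np nr lp lr Q y → PQuality f S y ≤ PQuality f S x}

/-- `Maxprob(x) = max_{p,r} x_{p,r}`. -/
def Maxprob {np nr : ℕ} (x : Fin np → Fin nr → ℝ) : ℝ := ⨆ p, ⨆ r, x p r

/-- `AvgMaxp(x) = (1/n_p) Σ_p max_r x_{p,r}`. -/
def AvgMaxp {np nr : ℕ} (x : Fin np → Fin nr → ℝ) : ℝ := (∑ p, ⨆ r, x p r) / np

/-- `Support(x) = #{(p,r) : x_{p,r} > 0}`. -/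
def SupportSize {np nr : ℕ} (x : Fin np → Fin nr → ℝ) : ℕ :=
  {pr : Fin np × Fin nr | 0 < x pr.1 pr.2}.ncard

/-- `Entropy(x) = -Σ_{p,r} x_{p,r} ln x_{p,r}` (with `Real.log 0 = 0`). -/
def Entropy {np nr : ℕ} (x : Fin np → Fin nr → ℝ) : ℝ :=
  -∑ p, ∑ r, x p r * Real.log (x p r)

/-- `L2Norm(x) = sqrt(Σ_{p,r} x_{p,r}²)`. -/
def L2Norm {np nr : ℕ} (x : Fin np → Fin nr → ℝ) : ℝ :=
  Real.sqrt (∑ p, ∑ r, (x p r) ^ 2)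

/-- A perturbation function: `f : [0,1] → [0,1]`, `f 0 = 0`, nondecreasing and concave
on `[0,1]` (differentiability is recorded separately via `HasDerivWithinAt`). -/
def IsPerturbation (f : ℝ → ℝ) : Prop :=
  f 0 = 0 ∧ (∀ t ∈ Set.Icc (0 : ℝ) 1, f t ∈ Set.Icc (0 : ℝ) 1) ∧
    MonotoneOn f (Set.Icc (0 : ℝ) 1) ∧ ConcaveOn ℝ (Set.Icc (0 : ℝ) 1) f

/-- `Dom(A) = sup {α : A i i ≥ α · A i j for all i ≠ j}`. -/
def DomA {k : ℕ} (A : Fin k → Fin k → ℝ) : ℝ :=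
  sSup {α : ℝ | ∀ i j, i ≠ j → α * A i j ≤ A i i}

/-
Each paper `p` of group `i` gets a price, the slope `A i i * f' (ℓ_p / r_i)` of its objective terms
at the entries `ℓ_p / r_i` of `x*`. Strict concavity puts the in-group terms strictly below the line
of this slope through `x*`. The out-group terms start at `0` with slope `A i j * f' 0`, which
dominance makes smaller than the price, so they lie strictly below their lines too. As all feasible
assignments have the same row sums, the linear parts cancel on summing over the reviewers of a
paper, and every feasible `y ≠ x*` is strictly worse than `x*`.
-/

section Concave

variable {s : Set ℝ} {f f' : ℝ → ℝ}

theorem lt_tangentLine_of_strictConcaveOn {m x y : ℝ} (hf : StrictConcaveOn ℝ s f)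
    (hm : HasDerivWithinAt f m s x) (hx : x ∈ s) (hy : y ∈ s) (hyx : y ≠ x) :
    f y < f x + m * (y - x) := by
  rcases hyx.lt_or_gt with h | h
  · have hslope := hf.lt_slope_of_hasDerivWithinAt hy hx h hm
    rw [slope_def_field, lt_div_iff₀ (sub_pos.2 h)] at hslope
    linarith
  · have hslope := hf.slope_lt_of_hasDerivWithinAt hx hy h hm
    rw [slope_def_field, div_lt_iff₀ (sub_pos.2 h)] at hslope
    linarith

theorem mul_lt_add_mul_of_strictConcaveOn {a b m t : ℝ}
    (hf : StrictConcaveOn ℝ s f) (hm : HasDerivWithinAt f m s 0) (h0 : 0 ∈ s) (ht : t ∈ s)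
    (ht0 : 0 < t) (ha : 0 ≤ a) (hab : a * m < b) :
    a * f t < a * f 0 + b * t := by
  have htangent : f t ≤ f 0 + m * t := by
    simpa only [sub_zero] using (lt_tangentLine_of_strictConcaveOn hf hm h0 ht ht0.ne').le
  calc
    a * f t ≤ a * (f 0 + m * t) := mul_le_mul_of_nonneg_left htangent ha
    _ = a * f 0 + a * m * t := by ring
    _ < a * f 0 + b * t := by gcongr

theorem antitoneOn_of_concaveOn_of_hasDerivWithinAt (hf : ConcaveOn ℝ s f)
    (hderiv : ∀ t ∈ s, HasDerivWithinAt f (f' t) s t) : AntitoneOn f' s := by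
  intro x hx y hy hxy
  rcases hxy.eq_or_lt with rfl | hlt
  · exact le_rfl
  · exact (hf.le_slope_of_hasDerivWithinAt hx hy hlt (hderiv y hy)).trans
      (hf.slope_le_of_hasDerivWithinAt hx hy hlt (hderiv x hx))

theorem IsPerturbation.deriv_nonneg {m t : ℝ} (hf : IsPerturbation f)
    (ht : t ∈ Set.Icc (0 : ℝ) 1) (hm : HasDerivWithinAt f m (Set.Icc (0 : ℝ) 1) t) : 0 ≤ m := by
  rw [← hm.derivWithin (uniqueDiffOn_Icc zero_lt_one t ht)]
  exact hf.2.2.1.derivWithin_nonneg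

end Concave

section Dominance

variable {k : ℕ} {A : Fin k → Fin k → ℝ} {a b : ℝ}

theorem domA_mul_le (hA : ∀ i j, 0 ≤ A i j) {i j : Fin k} (hij : i ≠ j) :
    DomA A * A i j ≤ A i i := by
  rcases (hA i j).eq_or_lt with h | h
  · simpa only [← h, mul_zero] using hA i i
  · rw [← le_div_iff₀ h]
    refine csSup_le ⟨0, fun i j _ ↦ ?_⟩ fun α hα ↦ (le_div_iff₀ h).2 (hα i j hij)
    simpa only [zero_mul] using hA i i

/- With fewer than two groups `Dom(A)` is `∞` on paper, but the real `sSup` of the unbounded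
defining set is `0`. -/
theorem nontrivial_of_domA_ne_zero (hD : DomA A ≠ 0) : Nontrivial (Fin k) := by
  by_contra hk
  rw [not_nontrivial_iff_subsingleton] at hk
  refine hD ?_
  have huniv : {α : ℝ | ∀ i j, i ≠ j → α * A i j ≤ A i i} = Set.univ :=
    Set.eq_univ_of_forall fun _ i j hij ↦ absurd (Subsingleton.elim i j) hij
  rw [DomA, huniv, Real.sSup_univ]

theorem diag_pos_of_domA_ne_zero (hA : ∀ i j, 0 ≤ A i j) (hdiag : ∀ i j, i ≠ j → A i j < A i i)
    (hD : DomA A ≠ 0) (i : Fin k) : 0 < A i i := by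
  have := nontrivial_of_domA_ne_zero hD
  obtain ⟨j, hji⟩ := exists_ne i
  exact (hA i j).trans_lt (hdiag i j hji.symm)

theorem mul_lt_diag_mul_of_lt_domA_mul (hA : ∀ i j, 0 ≤ A i j) {i j : Fin k} (hi : 0 < A i i)
    (hij : i ≠ j) (ha : 0 ≤ a) (hb : 0 ≤ b) (hab : a < DomA A * b) :
    A i j * a < A i i * b := by
  rcases (hA i j).eq_or_lt with h | h
  · have hb' : 0 < b := hb.lt_of_ne' (right_ne_zero_of_mul (ha.trans_lt hab).ne')
    simpa only [← h, zero_mul] using mul_pos hi hb'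
  · calc
      A i j * a < A i j * (DomA A * b) := mul_lt_mul_of_pos_left hab h
      _ = DomA A * A i j * b := by ring
      _ ≤ A i i * b := mul_le_mul_of_nonneg_right (domA_mul_le hA hij) hb

theorem IsPerturbation.diag_pos {f : ℝ → ℝ} (hf : IsPerturbation f)
    (hderiv : HasDerivWithinAt f a (Set.Icc (0 : ℝ) 1) 0) (hA : ∀ i j, 0 ≤ A i j)
    (hdiag : ∀ i j, i ≠ j → A i j < A i i) (hab : a < DomA A * b) (i : Fin k) : 0 < A i i := by
  have ha : 0 ≤ a := hf.deriv_nonneg (Set.left_mem_Icc.2 zero_le_one) hderiv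
  exact diag_pos_of_domA_ne_zero hA hdiag (left_ne_zero_of_mul (ha.trans_lt hab).ne') i

theorem IsPerturbation.mul_deriv_zero_lt_diag_mul_deriv {f f' : ℝ → ℝ} (hf : IsPerturbation f)
    (hderiv : ∀ t ∈ Set.Icc (0 : ℝ) 1, HasDerivWithinAt f (f' t) (Set.Icc (0 : ℝ) 1) t)
    (hA : ∀ i j, 0 ≤ A i j) {i j : Fin k} (hi : 0 < A i i) (hij : i ≠ j)
    (hf' : f' 0 < DomA A * f' 1) {t : ℝ} (ht : t ∈ Set.Icc (0 : ℝ) 1) :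
    A i j * f' 0 < A i i * f' t := by
  have h0 : (0 : ℝ) ∈ Set.Icc (0 : ℝ) 1 := Set.left_mem_Icc.2 zero_le_one
  have h1 : (1 : ℝ) ∈ Set.Icc (0 : ℝ) 1 := Set.right_mem_Icc.2 zero_le_one
  have hf't : f' 1 ≤ f' t :=
    antitoneOn_of_concaveOn_of_hasDerivWithinAt hf.2.2.2 hderiv ht h1 ht.2
  calc
    A i j * f' 0 < A i i * f' 1 :=
      mul_lt_diag_mul_of_lt_domA_mul hA hi hij (hf.deriv_nonneg h0 (hderiv 0 h0))
        (hf.deriv_nonneg h1 (hderiv 1 h1)) hf'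
    _ ≤ A i i * f' t := mul_le_mul_of_nonneg_left hf't hi.le

end Dominance

section Prices

variable {np nr lp lr : ℕ} {Q : ℝ} {f : ℝ → ℝ} {S x y : Fin np → Fin nr → ℝ} {price : Fin np → ℝ}

theorem pQuality_lt_pQuality_of_price (hsum : ∀ p, ∑ r, y p r = ∑ r, x p r) (hyx : y ≠ x)
    (hprice : ∀ p r, y p r ≠ x p r →
      S p r * f (y p r) < S p r * f (x p r) + price p * (y p r - x p r)) :
    PQuality f S y < PQuality f S x := by
  have hle (p r) : S p r * f (y p r) ≤ S p r * f (x p r) + price p * (y p r - x p r) := by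
    by_cases h : y p r = x p r
    · simp only [h, sub_self, mul_zero, add_zero, le_refl]
    · exact (hprice p r h).le
  obtain ⟨p₀, hp₀⟩ := Function.ne_iff.1 hyx
  obtain ⟨r₀, hr₀⟩ := Function.ne_iff.1 hp₀
  calc
    PQuality f S y < ∑ p, ∑ r, (S p r * f (x p r) + price p * (y p r - x p r)) :=
      sum_lt_sum (fun p _ ↦ sum_le_sum fun r _ ↦ hle p r) ⟨p₀, mem_univ p₀,
        sum_lt_sum (fun r _ ↦ hle p₀ r) ⟨r₀, mem_univ r₀, hprice p₀ r₀ hr₀⟩⟩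
    _ = PQuality f S x := by
      simp only [PQuality, sum_add_distrib, ← mul_sum, sum_sub_distrib, hsum, sub_self, mul_zero,
        add_zero]

theorem pm_eq_singleton_of_price (hx : Feasible np nr lp lr Q x)
    (hprice : ∀ p r, ∀ t ∈ Set.Icc 0 Q, t ≠ x p r →
      S p r * f t < S p r * f (x p r) + price p * (t - x p r)) :
    PM np nr lp lr Q f S = {x} := by
  have hlt (y) (hy : Feasible np nr lp lr Q y) (hyx : y ≠ x) : PQuality f S y < PQuality f S x :=
    pQuality_lt_pQuality_of_price (fun p ↦ (hy.1 p).trans (hx.1 p).symm) hyx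
      fun p r ↦ hprice p r _ (hy.2.2 p r)
  refine Set.eq_singleton_iff_unique_mem.2 ⟨⟨hx, fun y hy ↦ ?_⟩, fun y hy ↦ ?_⟩
  · rcases eq_or_ne y x with rfl | hyx
    · exact le_rfl
    · exact (hlt y hy hyx).le
  · by_contra hyx
    exact (hlt y hy.1 hyx).not_ge (hy.2 x hx)

end Prices

theorem sum_ite_eq_ncard_mul {ι : Type*} [Fintype ι] (P : ι → Prop) [DecidablePred P] (c : ℝ) :
    ∑ i, (if P i then c else 0) = {i | P i}.ncard * c := by
  rw [← sum_filter, sum_const, nsmul_eq_mul, Set.ncard_eq_toFinset_card', Set.toFinset_ofPred]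

section GroupUniform

variable {np nr : ℕ} {κ : Type*} {pg : Fin np → κ} {rg : Fin nr → κ} {lp lr : ℕ} {Q : ℝ}

/-- The share `ℓ_p / r_i` of a paper's load that each reviewer of group `i` receives under an even
split; it is `0` if the group has no reviewers. -/
def groupShare (lp : ℕ) (rg : Fin nr → κ) (i : κ) : ℝ :=
  (lp : ℝ) / {r : Fin nr | rg r = i}.ncard

/-- The within-group uniform assignment `x*`, where `pg` and `rg` send papers and reviewers to their
groups. -/
def groupUniform [DecidableEq κ] (lp : ℕ) (pg : Fin np → κ) (rg : Fin nr → κ) :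
    Fin np → Fin nr → ℝ :=
  fun p r ↦ if pg p = rg r then groupShare lp rg (pg p) else 0

theorem groupShare_mem_Icc (hQ : 0 ≤ Q) {i : κ}
    (hQr : (lp : ℝ) ≤ Q * {r : Fin nr | rg r = i}.ncard) :
    groupShare lp rg i ∈ Set.Icc 0 Q :=
  ⟨by unfold groupShare; positivity, div_le_of_le_mul₀ (Nat.cast_nonneg _) hQ hQr⟩

theorem ncard_mul_groupShare {i : κ} (hQr : (lp : ℝ) ≤ Q * {r : Fin nr | rg r = i}.ncard) :
    {r : Fin nr | rg r = i}.ncard * groupShare lp rg i = lp := by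
  refine mul_div_cancel_of_imp' fun hi ↦ ?_
  rw [hi, mul_zero] at hQr
  exact hQr.antisymm (Nat.cast_nonneg lp)

theorem sum_groupUniform_left [DecidableEq κ] (r : Fin nr) :
    ∑ p, groupUniform lp pg rg p r =
      {p : Fin np | pg p = rg r}.ncard * groupShare lp rg (rg r) := by
  rw [← sum_ite_eq_ncard_mul]
  refine sum_congr rfl fun p _ ↦ ?_
  unfold groupUniform
  split_ifs with h
  · rw [h]
  · rfl

theorem sum_groupUniform_right [DecidableEq κ] (p : Fin np) :
    ∑ r, groupUniform lp pg rg p r =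
      {r : Fin nr | rg r = pg p}.ncard * groupShare lp rg (pg p) := by
  simp only [groupUniform, eq_comm (a := pg p), sum_ite_eq_ncard_mul]

theorem ncard_mul_groupShare_le {m : ℕ} {r : Fin nr}
    (hload : m * lp ≤ {r' : Fin nr | rg r' = rg r}.ncard * lr) :
    m * groupShare lp rg (rg r) ≤ lr := by
  have hpos : 0 < {r' : Fin nr | rg r' = rg r}.ncard := (Set.ncard_pos (Set.toFinite _)).2 ⟨r, rfl⟩
  rw [groupShare, ← mul_div_assoc, div_le_iff₀' (Nat.cast_pos.2 hpos)]
  exact_mod_cast hload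

theorem feasible_groupUniform [DecidableEq κ] (hQ : 0 ≤ Q)
    (hload : ∀ i, {p : Fin np | pg p = i}.ncard * lp ≤ {r : Fin nr | rg r = i}.ncard * lr)
    (hQr : ∀ i, (lp : ℝ) ≤ Q * {r : Fin nr | rg r = i}.ncard) :
    Feasible np nr lp lr Q (groupUniform lp pg rg) := by
  refine ⟨fun p ↦ ?_, fun r ↦ ?_, fun p r ↦ ?_⟩
  · rw [sum_groupUniform_right, ncard_mul_groupShare (hQr _)]
  · rw [sum_groupUniform_left]
    exact ncard_mul_groupShare_le (hload _)
  · unfold groupUniform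
    split_ifs
    · exact groupShare_mem_Icc hQ (hQr _)
    · exact ⟨le_rfl, hQ⟩

end GroupUniform

theorem stmt4_general {np nr lp lr : ℕ} {κ : Type*} [DecidableEq κ] {Q : ℝ} (hQ : 0 ≤ Q)
    {S : Fin np → Fin nr → ℝ} {A : κ → κ → ℝ} {pg : Fin np → κ} {rg : Fin nr → κ}
    (hA : ∀ i j, 0 ≤ A i j) (hApos : ∀ i, 0 < A i i)
    (hSA : ∀ p r, S p r = A (pg p) (rg r))
    (hload : ∀ i, {p : Fin np | pg p = i}.ncard * lp ≤ {r : Fin nr | rg r = i}.ncard * lr)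
    (hQr : ∀ i, (lp : ℝ) ≤ Q * {r : Fin nr | rg r = i}.ncard)
    {f f' : ℝ → ℝ} (hf : StrictConcaveOn ℝ (Set.Icc 0 Q) f)
    (hderiv : ∀ t ∈ Set.Icc 0 Q, HasDerivWithinAt f (f' t) (Set.Icc 0 Q) t)
    (hdom : ∀ i j, i ≠ j → A i j * f' 0 < A i i * f' Q) :
    PM np nr lp lr Q f S = {groupUniform lp pg rg} := by
  refine pm_eq_singleton_of_price
    (price := fun p ↦ A (pg p) (pg p) * f' (groupShare lp rg (pg p)))
    (feasible_groupUniform hQ hload hQr) fun p r t ht hne ↦ ?_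
  have hshare := groupShare_mem_Icc hQ (hQr (pg p))
  rw [hSA]
  unfold groupUniform at hne ⊢
  split_ifs at hne ⊢ with hpr
  · have htangent := lt_tangentLine_of_strictConcaveOn hf (hderiv _ hshare) hshare ht hne
    rw [← hpr, mul_assoc, ← mul_add]
    exact mul_lt_mul_of_pos_left htangent (hApos _)
  · have h0 : (0 : ℝ) ∈ Set.Icc 0 Q := Set.left_mem_Icc.2 hQ
    have hslope : f' Q ≤ f' (groupShare lp rg (pg p)) :=
      antitoneOn_of_concaveOn_of_hasDerivWithinAt hf.concaveOn hderiv hshare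
        (Set.right_mem_Icc.2 hQ) hshare.2
    rw [sub_zero]
    exact mul_lt_add_mul_of_strictConcaveOn hf (hderiv 0 h0) h0 ht (ht.1.lt_of_ne' hne) (hA _ _)
      ((hdom _ _ hpr).trans_le (mul_le_mul_of_nonneg_left hslope (hApos _).le))

/-- on a blockwise dominant similarity matrix, the within-group
uniform assignment `x*` is the unique maximizer of `PQuality_f` over `F(Q)`,
i.e. `PM(Q,f) = {x*}`. -/
theorem stmt4 (np nr k lp lr : ℕ) (Q : ℝ) (hQ : Q ∈ Set.Icc (0 : ℝ) 1)
    (S : Fin np → Fin nr → ℝ) (A : Fin k → Fin k → ℝ)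
    (pg : Fin np → Fin k) (rg : Fin nr → Fin k)
    (hA0 : ∀ i j, 0 ≤ A i j)
    (hSA : ∀ p r, S p r = A (pg p) (rg r))
    (hdiag : ∀ i j, i ≠ j → A i j < A i i)
    (hload : ∀ i : Fin k,
      {p : Fin np | pg p = i}.ncard * lp ≤ {r : Fin nr | rg r = i}.ncard * lr)
    (hQr : ∀ i : Fin k, (lp : ℝ) ≤ Q * {r : Fin nr | rg r = i}.ncard)
    (f f' : ℝ → ℝ) (hf : IsPerturbation f)
    (hstrict : StrictConcaveOn ℝ (Set.Icc (0 : ℝ) 1) f)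
    (hderiv : ∀ t ∈ Set.Icc (0 : ℝ) 1, HasDerivWithinAt f (f' t) (Set.Icc (0 : ℝ) 1) t)
    (hf' : f' 0 < DomA A * f' 1)
    (xstar : Fin np → Fin nr → ℝ)
    (hxstar : ∀ p r, xstar p r =
      if pg p = rg r then (lp : ℝ) / {r' : Fin nr | rg r' = pg p}.ncard else 0) :
    PM np nr lp lr Q f S = {xstar} := by
  have hsub : Set.Icc 0 Q ⊆ Set.Icc 0 1 := Set.Icc_subset_Icc_right hQ.2
  have hApos := hf.diag_pos (hderiv 0 (Set.left_mem_Icc.2 zero_le_one)) hA0 hdiag hf'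
  obtain rfl : xstar = groupUniform lp pg rg := funext₂ hxstar
  exact stmt4_general hQ.1 hA0 hApos hSA hload hQr (hstrict.subset hsub (convex_Icc 0 Q))
    (fun t ht ↦ (hderiv t (hsub ht)).mono hsub)
    fun i _ hij ↦ hf.mul_deriv_zero_lt_diag_mul_deriv hderiv hA0 (hApos i) hij hf' hQ
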